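/- arXiv:1606.03982 — 3 statements merged into one kernel-verified Lean document; each statement's English description precedes it below -/
import Mathlib

section
/- For every complete commutative strong bimonoid 𝒜 and every 𝒜-weighted k-MCFG G there exists a non-deleting 𝒜-weighted k-MCFG G' that is equivalent to G, i.e. ⟦G'⟧ = ⟦G⟧. -/
namespace CS

/-! ### Dyck languages -/

/-- The smallest monoid congruence on `(S ⊕ S)*` (opening/closing brackets)
satisfying the cancellation `σ σ̄ ≡ ε`. -/
inductive DyckRel (S : Type) : List (S ⊕ S) → List (S ⊕ S) → Prop
  | cancel (σ : S) : DyckRel S [Sum.inl σ, Sum.inr σ] []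
  | refl (w : List (S ⊕ S)) : DyckRel S w w
  | symm {u v} : DyckRel S u v → DyckRel S v u
  | trans {u v w} : DyckRel S u v → DyckRel S v w → DyckRel S u w
  | append {u v u' v'} : DyckRel S u v → DyckRel S u' v' →
      DyckRel S (u ++ u') (v ++ v')

/-- The Dyck language `D(S) = [ε]_{≡_S}`. -/
def DyckLang (S : Type) : Set (List (S ⊕ S)) := {w | DyckRel S w []}

/-- The smallest monoid congruence on `(S ⊕ S)*` closed under the cancellation rule
of congruence multiple Dyck languages:  whenever `{σ₁, …, σ_ℓ} ∈ P`,
`u₀, …, u_ℓ, v₁, …, v_ℓ ∈ D(S)` and `v₁ ⋯ v_ℓ ≡ ε`, then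
`u₀ σ₁ v₁ σ̄₁ u₁ ⋯ σ_ℓ v_ℓ σ̄_ℓ u_ℓ ≡ u₀ u₁ ⋯ u_ℓ`.
The data of `σ₁, …, σ_ℓ`, `v₁, …, v_ℓ` and `u₁, …, u_ℓ` is given by a list
`ts` of triples `(σᵢ, vᵢ, uᵢ)`. -/
inductive MDyckRel (S : Type) (P : Set (Set S)) : List (S ⊕ S) → List (S ⊕ S) → Prop
  | refl (w : List (S ⊕ S)) : MDyckRel S P w w
  | symm {u v} : MDyckRel S P u v → MDyckRel S P v u
  | trans {u v w} : MDyckRel S P u v → MDyckRel S P v w → MDyckRel S P u w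
  | append {u v u' v'} : MDyckRel S P u v → MDyckRel S P u' v' →
      MDyckRel S P (u ++ u') (v ++ v')
  | cancel (u0 : List (S ⊕ S)) (ts : List (S × List (S ⊕ S) × List (S ⊕ S))) :
      (ts.map Prod.fst).Nodup →
      {σ | σ ∈ ts.map Prod.fst} ∈ P →
      u0 ∈ DyckLang S →
      (∀ t ∈ ts, t.2.1 ∈ DyckLang S ∧ t.2.2 ∈ DyckLang S) →
      MDyckRel S P ((ts.map (fun t => t.2.1)).flatten) [] →
      MDyckRel S P
        (u0 ++ (ts.map (fun t => Sum.inl t.1 :: t.2.1 ++ [Sum.inr t.1] ++ t.2.2)).flatten)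
        (u0 ++ (ts.map (fun t => t.2.2)).flatten)

/-- The congruence multiple Dyck language `mD_c(S, P) = [ε]_{≡_{S,P}}`. -/
def MDyckLang (S : Type) (P : Set (Set S)) : Set (List (S ⊕ S)) := {w | MDyckRel S P w []}

/-- The class of congruence multiple Dyck languages over `S` of dimension at most `k`. -/
def cmDyckClass (k : ℕ) (S : Type) : Set (Set (List (S ⊕ S))) :=
  {L | ∃ Pa : Set (Set S), Setoid.IsPartition Pa ∧ (∀ p ∈ Pa, p.ncard ≤ k) ∧
        L = MDyckLang S Pa}

/-! ### Complete commutative strong bimonoids -/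

/-- A complete commutative strong bimonoid: two commutative monoid structures
`(A, +, 0)` and `(A, ·, 1)` with `0` multiplicatively absorbing, together with an
infinitary sum operation satisfying the axioms of Droste and Vogler. -/
class CCSBimonoid (A : Type) extends AddCommMonoid A, CommMonoid A where
  zero_mul' : ∀ a : A, 0 * a = 0
  mul_zero' : ∀ a : A, a * 0 = 0
  bigSum : {I : Type} → Set I → (I → A) → A
  bigSum_empty : ∀ {I : Type} (f : I → A), bigSum (∅ : Set I) f = 0
  bigSum_singleton : ∀ {I : Type} (j : I) (f : I → A), bigSum {j} f = f j
  bigSum_pair : ∀ {I : Type} (j k : I) (f : I → A), j ≠ k →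
      bigSum {j, k} f = f j + f k
  bigSum_partition : ∀ {I J : Type} [Countable J] (T : J → Set I) (f : I → A),
      (∀ j j', j ≠ j' → T j ∩ T j' = ∅) →
      bigSum (Set.univ : Set J) (fun j => bigSum (T j) f) = bigSum (⋃ j, T j) f

/-! ### Multiple context-free grammars -/

/-- A production `A → [u₁, …, u_s](A₁, …, A_ℓ)` of an MCFG.  Letters of the
components are either terminals (`Sum.inl`) or variables `x_i^j`, encoded
0-based as pairs `(i, j)` (`Sum.inr`).  `wf` states well-sortedness of the
variables and `linear` that every variable occurs at most once in `u₁ ⋯ u_s`. -/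
structure Production (Δ N : Type) (sortN : N → ℕ) where
  lhs : N
  rhs : List N
  comp : List (List (Δ ⊕ ℕ × ℕ))
  comp_len : comp.length = sortN lhs
  wf : ∀ p ∈ comp.flatten.filterMap Sum.getRight?,
        ∃ h : p.1 < rhs.length, p.2 < sortN (rhs.get ⟨p.1, h⟩)
  linear : (comp.flatten.filterMap Sum.getRight?).Nodup

namespace Production

variable {Δ N : Type} {sortN : N → ℕ}

/-- The list of occurrences of variables in the components of a production. -/
def vars (ρ : Production Δ N sortN) : List (ℕ × ℕ) :=
  ρ.comp.flatten.filterMap Sum.getRight?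

/-- A production is non-deleting if every variable `x_i^j` occurs (at least,
hence by linearity exactly, once). -/
def NonDeleting (ρ : Production Δ N sortN) : Prop :=
  ∀ (i : ℕ) (h : i < ρ.rhs.length), ∀ j < sortN (ρ.rhs.get ⟨i, h⟩), (i, j) ∈ ρ.vars

/-- A production is terminal-free if no terminal occurs in its components. -/
def TerminalFree (ρ : Production Δ N sortN) : Prop :=
  ∀ u ∈ ρ.comp, ∀ v ∈ u, ∃ p : ℕ × ℕ, v = Sum.inr p

end Production

/-- Substitution of argument tuples for the variables of a component. -/
def subst {Δ : Type} (args : List (List (List Δ))) (u : List (Δ ⊕ ℕ × ℕ)) : List Δ :=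
  u.flatMap (fun v => match v with
    | Sum.inl d => [d]
    | Sum.inr (i, j) => (args.getD i []).getD j [])

/-- Rose trees; derivations of an MCFG are well-sorted trees over the productions. -/
inductive Tree (P : Type) : Type
  | node : P → List (Tree P) → Tree P

/-- The yield of a derivation tree: evaluate the string functions bottom-up. -/
def Tree.yield {Δ N : Type} {sortN : N → ℕ} :
    Tree (Production Δ N sortN) → List (List Δ)
  | .node ρ ts => ρ.comp.map (subst (ts.attach.map (fun t => Tree.yield t.1)))
decreasing_by simp_wf; have := List.sizeOf_lt_of_mem t.2; omega

/-- Relabelling of derivation trees. -/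
def Tree.map {P Q : Type} (f : P → Q) : Tree P → Tree Q
  | .node ρ ts => .node (f ρ) (ts.attach.map (fun t => Tree.map f t.1))
decreasing_by simp_wf; have := List.sizeOf_lt_of_mem t.2; omega

/-- Well-sorted derivation trees over a set of productions, from a given
non-terminal. -/
inductive WFDeriv {Δ N : Type} {sortN : N → ℕ} (P : Set (Production Δ N sortN)) :
    N → Tree (Production Δ N sortN) → Prop
  | node (ρ : Production Δ N sortN) (ts : List (Tree (Production Δ N sortN))) :
      ρ ∈ P → ts.length = ρ.rhs.length →
      (∀ (i : ℕ) (h1 : i < ts.length) (h2 : i < ρ.rhs.length),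
        WFDeriv P (ρ.rhs.get ⟨i, h2⟩) (ts.get ⟨i, h1⟩)) →
      WFDeriv P ρ.lhs (Tree.node ρ ts)

/-- A multiple context-free grammar over the terminal alphabet `Δ`. -/
structure MCFG (Δ : Type) where
  N : Type
  sortN : N → ℕ
  S : N
  sort_S : sortN S = 1
  P : Set (Production Δ N sortN)

namespace MCFG

variable {Δ : Type}

/-- The set `D_G` of derivations of `G` (from the initial non-terminal). -/
def Derivs (G : MCFG Δ) : Set (Tree (Production Δ G.N G.sortN)) :=
  {d | WFDeriv G.P G.S d}

/-- The language of an MCFG. -/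
def lang (G : MCFG Δ) : Set (List Δ) :=
  {w | ∃ d ∈ G.Derivs, d.yield = [w]}

/-- `G` has fan-out at most `k`. -/
def FanoutLE (G : MCFG Δ) (k : ℕ) : Prop := ∀ ρ ∈ G.P, ρ.comp.length ≤ k

/-- `G` is non-deleting. -/
def NonDeleting (G : MCFG Δ) : Prop := ∀ ρ ∈ G.P, ρ.NonDeleting

end MCFG

/-- The class of multiple context-free languages over `Δ` of fan-out at most `k`. -/
def MCFL (k : ℕ) (Δ : Type) : Set (Set (List Δ)) :=
  {L | ∃ G : MCFG Δ, Finite G.N ∧ G.P.Finite ∧ G.FanoutLE k ∧ G.lang = L}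

/-! ### Weighted MCFGs -/

/-- The weight of a derivation tree: multiply the weights of the productions at
all positions. -/
def Tree.weight {P A : Type} [CCSBimonoid A] (μ : P → A) : Tree P → A
  | .node ρ ts => μ ρ * (ts.attach.map (fun t => Tree.weight μ t.1)).prod
decreasing_by simp_wf; have := List.sizeOf_lt_of_mem t.2; omega

/-- An `A`-weighted MCFG. -/
structure WMCFG (A Δ : Type) [CCSBimonoid A] extends MCFG Δ where
  μ : Production Δ N sortN → A
  μ_ne : ∀ ρ ∈ P, μ ρ ≠ 0

/-- The weighted language induced by an `A`-weighted MCFG: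
`⟦G⟧(w) = Σ_{d derivation of w} μ̂(d)`. -/
noncomputable def WMCFG.sem {A Δ : Type} [CCSBimonoid A] (G : WMCFG A Δ) :
    List Δ → A :=
  fun w => CCSBimonoid.bigSum
    {d | WFDeriv G.P G.S d ∧ d.yield = [w]} (fun d => d.weight G.μ)

/-- The class of `A`-weighted multiple context-free languages over `Δ`
of fan-out at most `k`. -/
def WMCFL (k : ℕ) (A Δ : Type) [CCSBimonoid A] : Set (List Δ → A) :=
  {L | ∃ G : WMCFG A Δ, Finite G.N ∧ G.P.Finite ∧ G.toMCFG.FanoutLE k ∧ G.sem = L}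

/-! ### Weighted homomorphisms -/

/-- A weighted language is a monomial if its support has at most one element. -/
def IsMonomial {Γ A : Type} [CCSBimonoid A] (m : List Γ → A) : Prop :=
  ∀ u v, m u ≠ 0 → m v ≠ 0 → u = v

/-- `g` induces an `A`-weighted homomorphism. -/
def WeightedHom {Δ Γ A : Type} [CCSBimonoid A] (g : Δ → List Γ → A) : Prop :=
  ∀ δ, IsMonomial (g δ)

/-- `g` induces an `A`-weighted alphabetic homomorphism: all supports consist of
words of length at most 1. -/
def AlphabeticWeightedHom {Δ Γ A : Type} [CCSBimonoid A] (g : Δ → List Γ → A) : Prop :=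
  WeightedHom g ∧ ∀ δ u, g δ u ≠ 0 → u.length ≤ 1

/-- The `A`-weighted homomorphism `ĝ` induced by `g`:
`ĝ(δ₁⋯δ_k)(u) = Σ_{u = u₁⋯u_k} g(δ₁)(u₁)·…·g(δ_k)(u_k)`. -/
noncomputable def whom {Δ Γ A : Type} [CCSBimonoid A] (g : Δ → List Γ → A)
    (w : List Δ) : List Γ → A :=
  fun u => CCSBimonoid.bigSum
    {ds : List (List Γ) | ds.length = w.length ∧ ds.flatten = u}
    (fun ds => ((w.zip ds).map (fun p => g p.1 p.2)).prod)

/-- The image of a language under an `A`-weighted homomorphism: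
`ĝ(L)(u) = Σ_{w ∈ L} ĝ(w)(u)`. -/
noncomputable def whomImage {Δ Γ A : Type} [CCSBimonoid A] (g : Δ → List Γ → A)
    (L : Set (List Δ)) : List Γ → A :=
  fun u => CCSBimonoid.bigSum L (fun w => whom g w u)

/-! ### Regular languages -/

/-- A language is regular if it is recognised by a finite automaton. -/
def IsRegular {α : Type} (L : Set (List α)) : Prop :=
  ∃ (Q : Type) (_ : Fintype Q) (M : DFA α Q), ∀ w, w ∈ M.accepts ↔ w ∈ L

end CS
namespace CS

/-! ### The unweighted MCFG for a weighted MCFG (weight separation) -/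

/-- Relabel the terminals of a component into the marked alphabet. -/
def markify (M : Type) {Δ : Type} (u : List (Δ ⊕ ℕ × ℕ)) :
    List ((Δ ⊕ M) ⊕ ℕ × ℕ) :=
  u.map (Sum.map Sum.inl id)

lemma markify_filterMap (M : Type) {Δ : Type} (u : List (Δ ⊕ ℕ × ℕ)) :
    (markify M u).filterMap Sum.getRight? = u.filterMap Sum.getRight? := by
  induction u with
  | nil => rfl
  | cons a l ih =>
    cases a with
    | inl d => exact ih
    | inr p => exact congrArg (List.cons p) ih

lemma filterMap_flatten {α β : Type} (f : α → Option β) (l : List (List α)) :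
    l.flatten.filterMap f = (l.map (List.filterMap f)).flatten := by
  induction l <;> simp [*]

lemma ofFn_comp_get {α β : Type} (l : List α) (h : α → β) :
    List.ofFn (fun i : Fin l.length => h (l.get i)) = l.map h := by
  conv_rhs => rw [← List.ofFn_get l]
  rw [List.map_ofFn]
  rfl

lemma mark_flatten_vars {Δ M : Type} (l : List (List (Δ ⊕ ℕ × ℕ)))
    (mk : Fin l.length → Δ ⊕ M) :
    (List.ofFn (fun i =>
        (Sum.inl (mk i) : (Δ ⊕ M) ⊕ ℕ × ℕ) :: markify M (l.get i))).flatten.filterMap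
      Sum.getRight? = l.flatten.filterMap Sum.getRight? := by
  rw [filterMap_flatten, List.map_ofFn, filterMap_flatten]
  congr 1
  have : (List.filterMap Sum.getRight? ∘ fun i =>
      (Sum.inl (mk i) : (Δ ⊕ M) ⊕ ℕ × ℕ) :: markify M (l.get i))
      = fun i : Fin l.length => (l.get i).filterMap Sum.getRight? := by
    funext i
    simp [List.filterMap_cons, Sum.getRight?, markify_filterMap]
  rw [this, ofFn_comp_get]

/-- The production of the unweighted MCFG `G_𝔹` corresponding to a production
`ρ = A → [u₁, …, u_s](A₁, …, A_m)`: each component `uᵢ` is prefixed with the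
fresh terminal symbol `ρ^i` (encoded as `Sum.inr (ρ, i)`, 0-based). -/
def boolifyProd {Δ N : Type} {sortN : N → ℕ} (ρ : Production Δ N sortN) :
    Production (Δ ⊕ Production Δ N sortN × ℕ) N sortN where
  lhs := ρ.lhs
  rhs := ρ.rhs
  comp := List.ofFn (fun i : Fin ρ.comp.length =>
    Sum.inl (Sum.inr (ρ, (i : ℕ))) ::
      markify (Production Δ N sortN × ℕ) (ρ.comp.get i))
  comp_len := by rw [List.length_ofFn]; exact ρ.comp_len
  wf := by
    intro p hp
    rw [mark_flatten_vars] at hp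
    exact ρ.wf p hp
  linear := by
    rw [mark_flatten_vars]
    exact ρ.linear

/-- The unweighted MCFG `G_𝔹` for a weighted MCFG `G`. -/
def boolifyGrammar {A Δ : Type} [CCSBimonoid A] (G : WMCFG A Δ) :
    MCFG (Δ ⊕ Production Δ G.N G.sortN × ℕ) where
  N := G.N
  sortN := G.sortN
  S := G.S
  sort_S := G.sort_S
  P := boolifyProd '' G.P

/-- The weight homomorphism `wts_G` for a weighted MCFG `G`:
`wts_G(δ) = 1.δ`, `wts_G(ρ^1) = μ(ρ).ε` and `wts_G(ρ^i) = 1.ε` for `i ≥ 2`. -/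
noncomputable def wtsHom {A Δ : Type} [CCSBimonoid A] (G : WMCFG A Δ) :
    (Δ ⊕ Production Δ G.N G.sortN × ℕ) → List Δ → A := by
  classical
  exact fun γ w => match γ with
    | Sum.inl d => if w = [d] then 1 else 0
    | Sum.inr (ρ, i) => if w = [] then (if i = 0 then G.μ ρ else 1) else 0

/-! ### The multiple Dyck grammar -/

/-- The sorted alphabet `Σ` induced by an `ℕ₊`-sorted set `(Δ, sd)`:
the opening parentheses `δ^[i]` (0-based: `i < sd δ`). -/
abbrev MSig (Δ : Type) (sd : Δ → ℕ) : Type := {p : Δ × ℕ // p.2 < sd p.1}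

/-- The terminal alphabet `Δ̂` of the multiple Dyck grammar: opening and closing
parentheses. -/
abbrev MAlph (Δ : Type) (sd : Δ → ℕ) : Type := MSig Δ sd ⊕ MSig Δ sd

/-- The partition `𝔓 = {𝔭_δ ∣ δ ∈ Δ}` with `𝔭_δ = {δ^[i] ∣ i ∈ [sd δ]}`. -/
def mdgPart (Δ : Type) (sd : Δ → ℕ) : Set (Set (MSig Δ sd)) :=
  {s | ∃ δ : Δ, s = {p : MSig Δ sd | p.1.1 = δ}}

/-- Sorts of the non-terminals `A₁, …, A_k` (0-based: `A_{i+1}` has sort `i+1`). -/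
def dyckSort (k : ℕ) : Fin k → ℕ := fun i => (i : ℕ) + 1

/-- Productions of type (i): `A_s → f(A_{s₁}, …, A_{s_ℓ})` for every linear
non-deleting terminal-free string function `f` with `ℓ ≤ r`. -/
def TypeI (Δ : Type) (sd : Δ → ℕ) (k r : ℕ)
    (ρ : Production (MAlph Δ sd) (Fin k) (dyckSort k)) : Prop :=
  ρ.rhs.length ≤ r ∧ ρ.NonDeleting ∧ ρ.TerminalFree

/-- Productions of type (ii):
`A_s → [δ^[1] x₁^1 δ̄^[1], …, δ^[s] x₁^s δ̄^[s]](A_s)` for `δ` of sort `s`. -/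
def TypeII (Δ : Type) (sd : Δ → ℕ) (k : ℕ)
    (ρ : Production (MAlph Δ sd) (Fin k) (dyckSort k)) : Prop :=
  ∃ δ : Δ, dyckSort k ρ.lhs = sd δ ∧ ρ.rhs = [ρ.lhs] ∧
    ρ.comp = List.ofFn (fun j : Fin (sd δ) =>
      [Sum.inl (Sum.inl ⟨(δ, (j : ℕ)), j.isLt⟩),
       Sum.inr ((0 : ℕ), (j : ℕ)),
       Sum.inl (Sum.inr ⟨(δ, (j : ℕ)), j.isLt⟩)])

/-- Productions of type (iii): `A_s → [u₁, …, u_s](A_s)` where each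
`u_j ∈ {x_j, x_j δ^[1] δ̄^[1], δ^[1] δ̄^[1] x_j}` for `δ` of sort 1. -/
def TypeIII (Δ : Type) (sd : Δ → ℕ) (k : ℕ)
    (ρ : Production (MAlph Δ sd) (Fin k) (dyckSort k)) : Prop :=
  ρ.rhs = [ρ.lhs] ∧
  ∀ (j : ℕ) (h : j < ρ.comp.length),
    ρ.comp.get ⟨j, h⟩ = [Sum.inr ((0 : ℕ), j)] ∨
    ∃ (δ : Δ) (h1 : 0 < sd δ), sd δ = 1 ∧
      (ρ.comp.get ⟨j, h⟩ =
        [Sum.inr ((0 : ℕ), j),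
         Sum.inl (Sum.inl ⟨(δ, 0), h1⟩), Sum.inl (Sum.inr ⟨(δ, 0), h1⟩)] ∨
       ρ.comp.get ⟨j, h⟩ =
        [Sum.inl (Sum.inl ⟨(δ, 0), h1⟩), Sum.inl (Sum.inr ⟨(δ, 0), h1⟩),
         Sum.inr ((0 : ℕ), j)])

/-- The productions of the multiple Dyck grammar `G_Δ`. -/
def mdgProds (Δ : Type) (sd : Δ → ℕ) (k r : ℕ) :
    Set (Production (MAlph Δ sd) (Fin k) (dyckSort k)) :=
  {ρ | TypeI Δ sd k r ρ ∨ TypeII Δ sd k ρ ∨ TypeIII Δ sd k ρ}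

/-- The multiple Dyck grammar `G_Δ` with respect to the sorted set `(Δ, sd)`. -/
def mdgGrammar (Δ : Type) (sd : Δ → ℕ) (k r : ℕ) (hk : 0 < k) :
    MCFG (MAlph Δ sd) where
  N := Fin k
  sortN := dyckSort k
  S := ⟨0, hk⟩
  sort_S := rfl
  P := mdgProds Δ sd k r

end CS
namespace CS

section NDAux

/-- Selections of components. -/
abbrev NDSel (M : ℕ) : Type := {l : List ℕ // l.Sublist (List.range M)}

theorem NDSel.finite (M : ℕ) : Finite (NDSel M) := by
  have : {l : List ℕ | l.Sublist (List.range M)}.Finite := by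
    have h : {l : List ℕ | l ∈ (List.range M).sublists}.Finite := List.finite_toSet _
    simpa using h
  exact this.to_subtype

variable {Δ N : Type} {sortN : N → ℕ}

/-- Sorts of the new non-terminals. -/
def ndSort (N : Type) (M : ℕ) (T : Type) : (N × NDSel M) ⊕ T → ℕ
  | Sum.inl p => p.2.1.length
  | Sum.inr _ => 0

def ndKeep (ρ : Production Δ N sortN) (l : List ℕ) : List (List (Δ ⊕ ℕ × ℕ)) :=
  l.map (fun j => ρ.comp.getD j [])

def ndKv (ρ : Production Δ N sortN) (l : List ℕ) : List (ℕ × ℕ) :=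
  (ndKeep ρ l).flatten.filterMap Sum.getRight?

def ndPhi (M : ℕ) (ρ : Production Δ N sortN) (l : List ℕ) (i : ℕ) : NDSel M :=
  ⟨(List.range M).filter (fun j => decide ((i, j) ∈ ndKv ρ l)), List.filter_sublist⟩

def ndRen (M : ℕ) (ρ : Production Δ N sortN) (l : List ℕ) (p : ℕ × ℕ) : ℕ × ℕ :=
  (p.1, (ndPhi M ρ l p.1).1.idxOf p.2)

def ndComp (M : ℕ) (ρ : Production Δ N sortN) (l : List ℕ) : List (List (Δ ⊕ ℕ × ℕ)) :=
  (ndKeep ρ l).map (List.map (Sum.map id (ndRen M ρ l)))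

theorem nd_filterMap_map (f : ℕ × ℕ → ℕ × ℕ) (u : List (Δ ⊕ ℕ × ℕ)) :
    (u.map (Sum.map id f)).filterMap Sum.getRight? =
      (u.filterMap Sum.getRight?).map f := by
  induction u with
  | nil => rfl
  | cons a l ih =>
    cases a with
    | inl d => exact ih
    | inr p => exact congrArg (List.cons (f p)) ih

theorem ndComp_vars (M : ℕ) (ρ : Production Δ N sortN) (l : List ℕ) :
    (ndComp M ρ l).flatten.filterMap Sum.getRight? = (ndKv ρ l).map (ndRen M ρ l) := by
  rw [ndComp, ndKv, ← List.map_flatten, nd_filterMap_map]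

theorem nd_range_flatten {α : Type} (M : ℕ) (c : List (List α)) (h : c.length ≤ M) :
    ((List.range M).map (fun j => c.getD j [])).flatten = c.flatten := by
  obtain ⟨m, rfl⟩ := Nat.exists_eq_add_of_le h
  rw [List.range_add, List.map_append, List.flatten_append, List.map_map]
  have h1 : (List.range c.length).map (fun j => c.getD j []) = c := by
    apply List.ext_getElem
    · simp
    · intro i h1 h2
      simp [h2]
  have h2 : ((List.range m).map ((fun j => c.getD j []) ∘ fun x => c.length + x)).flatten = [] := by
    simp
  rw [h1, h2, List.append_nil]

theorem ndKv_sublist (M : ℕ) (hM : ∀ A, sortN A ≤ M) (ρ : Production Δ N sortN)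
    (b : NDSel M) : (ndKv ρ b.1).Sublist (ρ.comp.flatten.filterMap Sum.getRight?) := by
  rw [← nd_range_flatten M ρ.comp (by rw [ρ.comp_len]; exact hM _)]
  exact ((b.2.map _).flatten).filterMap _

theorem nd_mem_phi (M : ℕ) (hM : ∀ A, sortN A ≤ M) (ρ : Production Δ N sortN)
    (b : NDSel M) (i j : ℕ) : j ∈ (ndPhi M ρ b.1 i).1 ↔ (i, j) ∈ ndKv ρ b.1 := by
  simp only [ndPhi, List.mem_filter, List.mem_range, decide_eq_true_eq, and_iff_right_iff_imp]
  intro h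
  obtain ⟨h1, h2⟩ := ρ.wf _ ((ndKv_sublist M hM ρ b).subset h)
  exact lt_of_lt_of_le h2 (hM _)

variable {T : Type}

def ndRhs (M : ℕ) (t : T) (ρ : Production Δ N sortN) (l : List ℕ) :
    List ((N × NDSel M) ⊕ T) :=
  List.ofFn (fun i : Fin ρ.rhs.length => Sum.inl (ρ.rhs.get i, ndPhi M ρ l i)) ++ [Sum.inr t]

theorem ndRhs_length (M : ℕ) (t : T) (ρ : Production Δ N sortN) (l : List ℕ) :
    (ndRhs M t ρ l).length = ρ.rhs.length + 1 := by simp [ndRhs]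

theorem ndRhs_get_lt (M : ℕ) (t : T) (ρ : Production Δ N sortN) (l : List ℕ) (i : ℕ)
    (h : i < ρ.rhs.length) (h' : i < (ndRhs M t ρ l).length) :
    (ndRhs M t ρ l).get ⟨i, h'⟩ = Sum.inl (ρ.rhs.get ⟨i, h⟩, ndPhi M ρ l i) := by
  simp [ndRhs, List.getElem_append, h]

theorem ndRhs_get_last (M : ℕ) (t : T) (ρ : Production Δ N sortN) (l : List ℕ)
    (h' : ρ.rhs.length < (ndRhs M t ρ l).length) :
    (ndRhs M t ρ l).get ⟨ρ.rhs.length, h'⟩ = Sum.inr t := by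
  simp [ndRhs, List.getElem_append]

/-- The non-deleting production for a selection. -/
def ndProd (M : ℕ) (hM : ∀ A, sortN A ≤ M) (code : Production Δ N sortN → T)
    (ρ : Production Δ N sortN) (b : NDSel M) :
    Production Δ ((N × NDSel M) ⊕ T) (ndSort N M T) where
  lhs := Sum.inl (ρ.lhs, b)
  rhs := ndRhs M (code ρ) ρ b.1
  comp := ndComp M ρ b.1
  comp_len := by simp [ndComp, ndKeep, ndSort]
  wf := by
    intro p hp
    rw [ndComp_vars, List.mem_map] at hp
    obtain ⟨⟨i, j⟩, hq, rfl⟩ := hp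
    obtain ⟨h1, h2⟩ := ρ.wf _ ((ndKv_sublist M hM ρ b).subset hq)
    have h3 : i < (ndRhs M (code ρ) ρ b.1).length := by
      rw [ndRhs_length]; exact Nat.lt_succ_of_lt h1
    refine ⟨h3, ?_⟩
    have := ndRhs_get_lt M (code ρ) ρ b.1 i h1 h3
    simp only [ndRen]
    rw [this]
    exact List.idxOf_lt_length_of_mem ((nd_mem_phi M hM ρ b i j).2 hq)
  linear := by
    rw [ndComp_vars]
    refine List.Nodup.map_on ?_ ((ndKv_sublist M hM ρ b).nodup ρ.linear)
    rintro ⟨i, j⟩ h1 ⟨i', j'⟩ h2 h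
    simp only [ndRen, Prod.mk.injEq] at h
    obtain ⟨rfl, h⟩ := h
    rw [List.idxOf_inj ((nd_mem_phi M hM ρ b i j).2 h1)] at h
    rw [h]

theorem ndProd_nonDeleting (M : ℕ) (hM : ∀ A, sortN A ≤ M) (code : Production Δ N sortN → T)
    (ρ : Production Δ N sortN) (b : NDSel M) : (ndProd M hM code ρ b).NonDeleting := by
  intro i h j hj
  change (i, j) ∈ (ndComp M ρ b.1).flatten.filterMap Sum.getRight?
  rw [ndComp_vars, List.mem_map]
  change i < (ndRhs M (code ρ) ρ b.1).length at h
  change j < ndSort N M T ((ndRhs M (code ρ) ρ b.1).get ⟨i, h⟩) at hj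
  by_cases hi : i < ρ.rhs.length
  · rw [ndRhs_get_lt M (code ρ) ρ b.1 i hi h] at hj
    change j < (ndPhi M ρ b.1 i).1.length at hj
    refine ⟨(i, (ndPhi M ρ b.1 i).1[j]), (nd_mem_phi M hM ρ b i _).1 (List.getElem_mem hj), ?_⟩
    simp only [ndRen]
    rw [List.Nodup.idxOf_getElem ((ndPhi M ρ b.1 i).2.nodup List.nodup_range)]
  · have : i = ρ.rhs.length := by rw [ndRhs_length] at h; omega
    subst this
    rw [ndRhs_get_last] at hj
    simp [ndSort] at hj

/-- Tag productions. -/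
def ndTag (Δ N : Type) (M : ℕ) (t : T) : Production Δ ((N × NDSel M) ⊕ T) (ndSort N M T) where
  lhs := Sum.inr t
  rhs := []
  comp := []
  comp_len := rfl
  wf := by simp
  linear := by simp

theorem ndProd_inj (M : ℕ) (hM : ∀ A, sortN A ≤ M) (code : Production Δ N sortN → T)
    {ρ ρ' : Production Δ N sortN} {b b' : NDSel M}
    (h : ndProd M hM code ρ b = ndProd M hM code ρ' b') : code ρ = code ρ' ∧ b = b' := by
  have h1 := congrArg Production.lhs h
  have h2 := congrArg Production.rhs h
  simp only [ndProd, Sum.inl.injEq, Prod.mk.injEq] at h1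
  refine ⟨?_, h1.2⟩
  have h3 := congrArg List.getLast? h2
  simpa [ndProd, ndRhs] using h3

theorem ndProd_ne_ndTag (M : ℕ) (hM : ∀ A, sortN A ≤ M) (code : Production Δ N sortN → T)
    (ρ : Production Δ N sortN) (b : NDSel M) (t : T) :
    ndProd M hM code ρ b ≠ ndTag Δ N M t := by
  intro h
  have h1 := congrArg Production.lhs h
  simp [ndProd, ndTag] at h1

/-- Conversion of derivations. -/
def ndConv (M : ℕ) (hM : ∀ A, sortN A ≤ M) (code : Production Δ N sortN → T) :
    NDSel M → Tree (Production Δ N sortN) →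
      Tree (Production Δ ((N × NDSel M) ⊕ T) (ndSort N M T))
  | b, .node ρ ts => .node (ndProd M hM code ρ b)
      (List.ofFn (fun i : Fin ts.length =>
        ndConv M hM code (ndPhi M ρ b.1 i) (ts.get i)) ++ [.node (ndTag Δ N M (code ρ)) []])
termination_by _ t => sizeOf t
decreasing_by
  simp_wf
  have := List.sizeOf_lt_of_mem (List.getElem_mem i.2)
  omega

/-- The productions of the new grammar. -/
def ndP (M : ℕ) (hM : ∀ A, sortN A ≤ M) (code : Production Δ N sortN → T)
    (P : Set (Production Δ N sortN)) :
    Set (Production Δ ((N × NDSel M) ⊕ T) (ndSort N M T)) :=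
  {q | (∃ ρ ∈ P, ∃ b : NDSel M, (∀ j ∈ b.1, j < sortN ρ.lhs) ∧ q = ndProd M hM code ρ b) ∨
    ∃ t, q = ndTag Δ N M t}

theorem ndPhi_valid (M : ℕ) (hM : ∀ A, sortN A ≤ M) (ρ : Production Δ N sortN) (b : NDSel M)
    (i : ℕ) (h : i < ρ.rhs.length) :
    ∀ j ∈ (ndPhi M ρ b.1 i).1, j < sortN (ρ.rhs.get ⟨i, h⟩) := by
  intro j hj
  rw [nd_mem_phi M hM] at hj
  obtain ⟨h1, h2⟩ := ρ.wf _ ((ndKv_sublist M hM ρ b).subset hj)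
  exact h2

theorem ndTag_wf (M : ℕ) (hM : ∀ A, sortN A ≤ M) (code : Production Δ N sortN → T)
    (P : Set (Production Δ N sortN)) (t : T) :
    WFDeriv (ndP M hM code P) (Sum.inr t) (.node (ndTag Δ N M t) []) :=
  WFDeriv.node (ndTag Δ N M t) [] (Or.inr ⟨t, rfl⟩) rfl (fun i h1 _ => by simp at h1)

theorem ndConv_wf (M : ℕ) (hM : ∀ A, sortN A ≤ M) (code : Production Δ N sortN → T)
    (P : Set (Production Δ N sortN)) {A : N} {d : Tree (Production Δ N sortN)}
    (hd : WFDeriv P A d) : ∀ b : NDSel M, (∀ j ∈ b.1, j < sortN A) →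
      WFDeriv (ndP M hM code P) (Sum.inl (A, b)) (ndConv M hM code b d) := by
  induction hd with
  | node ρ ts hρ hlen hch ih =>
    intro b hb
    rw [ndConv]
    refine WFDeriv.node (ndProd M hM code ρ b) _ (Or.inl ⟨ρ, hρ, b, hb, rfl⟩) ?_ ?_
    · change _ = (ndRhs M (code ρ) ρ b.1).length
      simp [ndRhs_length, hlen]
    · intro i h1 h2
      change i < (ndRhs M (code ρ) ρ b.1).length at h2
      change WFDeriv _ ((ndRhs M (code ρ) ρ b.1).get ⟨i, h2⟩) _
      by_cases hi : i < ρ.rhs.length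
      · have hi' : i < ts.length := by omega
        rw [ndRhs_get_lt M (code ρ) ρ b.1 i hi h2]
        have := ih i hi' hi (ndPhi M ρ b.1 i) (ndPhi_valid M hM ρ b i hi)
        simpa [List.getElem_append, hi'] using this
      · have : i = ρ.rhs.length := by rw [ndRhs_length] at h2; omega
        subst this
        rw [ndRhs_get_last]
        have := ndTag_wf M hM code P (code ρ)
        simpa [List.getElem_append, hlen] using this

theorem ndConv_inj (M : ℕ) (hM : ∀ A, sortN A ≤ M) (code : Production Δ N sortN → T)
    (P : Set (Production Δ N sortN)) (hc : Set.InjOn code P)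
    {A : N} {d : Tree (Production Δ N sortN)} (hd : WFDeriv P A d) :
    ∀ (A' : N) (d' : Tree (Production Δ N sortN)), WFDeriv P A' d' → ∀ b : NDSel M,
      ndConv M hM code b d = ndConv M hM code b d' → d = d' := by
  induction hd with
  | node ρ ts hρ hlen hch ih =>
    intro A' d' hd' b h
    cases hd' with
    | node ρ' ts' hρ' hlen' hch' =>
      rw [ndConv, ndConv, Tree.node.injEq] at h
      obtain ⟨h1, h2⟩ := h
      have := hc hρ hρ' (ndProd_inj M hM code h1).1
      subst this
      have h3 := List.append_cancel_right h2
      have hl : ts.length = ts'.length := by rw [hlen, hlen']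
      congr 1
      apply List.ext_getElem hl
      intro i hi hi'
      have h4 := ih i hi (hlen ▸ hi) _ _ (hch' i hi' (hlen ▸ hi)) (ndPhi M ρ b.1 i)
      apply h4
      have h5 := congrArg (fun l => l[i]?) h3
      simpa [hi, hi'] using h5

theorem ndConv_surj (M : ℕ) (hM : ∀ A, sortN A ≤ M) (code : Production Δ N sortN → T)
    (P : Set (Production Δ N sortN)) {X : (N × NDSel M) ⊕ T}
    {d' : Tree (Production Δ ((N × NDSel M) ⊕ T) (ndSort N M T))}
    (hd : WFDeriv (ndP M hM code P) X d') :
    (∀ A b, X = Sum.inl (A, b) → ∃ d, WFDeriv P A d ∧ ndConv M hM code b d = d') ∧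
    (∀ t, X = Sum.inr t → d' = .node (ndTag Δ N M t) []) := by
  induction hd with
  | node ρ' ts hρ hlen hch ih =>
    rcases hρ with ⟨ρ, hρ, b, hb, rfl⟩ | ⟨t, rfl⟩
    · refine ⟨?_, ?_⟩
      swap
      · intro t h
        simp [ndProd] at h
      intro A b' h
      change (Sum.inl (ρ.lhs, b) : (N × NDSel M) ⊕ T) = _ at h
      simp only [Sum.inl.injEq, Prod.mk.injEq] at h
      obtain ⟨rfl, rfl⟩ := h
      change ts.length = (ndRhs M (code ρ) ρ b.1).length at hlen
      have hlen' := hlen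
      rw [ndRhs_length] at hlen'
      have key : ∀ i : Fin ρ.rhs.length, ∃ d, WFDeriv P (ρ.rhs.get i) d ∧
          ndConv M hM code (ndPhi M ρ b.1 i) d = ts.get ⟨i, by omega⟩ := by
        intro i
        exact (ih i (by omega) (show (i : ℕ) < (ndRhs M (code ρ) ρ b.1).length by omega)).1 _ _
          (ndRhs_get_lt M (code ρ) ρ b.1 i i.2 (by rw [← hlen]; omega))
      choose ds hds1 hds2 using key
      refine ⟨.node ρ (List.ofFn ds), WFDeriv.node ρ _ hρ (by simp) ?_, ?_⟩
      · intro i h1 h2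
        simpa using hds1 ⟨i, h2⟩
      · rw [ndConv]
        congr 1
        apply List.ext_getElem
        · simp [hlen']
        · intro i h1 h2
          by_cases hi : i < ρ.rhs.length
          · simpa [List.getElem_append, hi] using hds2 ⟨i, hi⟩
          · have : i = ρ.rhs.length := by omega
            subst this
            have h6 := (ih ρ.rhs.length h2
              (show ρ.rhs.length < (ndRhs M (code ρ) ρ b.1).length by omega)).2 _
              (ndRhs_get_last M (code ρ) ρ b.1 (by rw [← hlen]; omega))
            simpa [List.getElem_append] using h6.symm
    · refine ⟨?_, ?_⟩
      · intro A b h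
        simp [ndTag] at h
      · intro t' h
        simp only [ndTag, Sum.inr.injEq] at h
        subst h
        congr 1
        exact List.length_eq_zero_iff.1 hlen

theorem nd_yield_node {Δ N : Type} {sortN : N → ℕ} (ρ : Production Δ N sortN)
    (ts : List (Tree (Production Δ N sortN))) :
    Tree.yield (.node ρ ts) = ρ.comp.map (subst (ts.map Tree.yield)) := by
  rw [Tree.yield, List.attach_map_val (f := Tree.yield)]

theorem nd_weight_node {Q A : Type} [CCSBimonoid A] (μ : Q → A) (ρ : Q)
    (ts : List (Tree Q)) :
    Tree.weight μ (.node ρ ts) = μ ρ * (ts.map (Tree.weight μ)).prod := by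
  rw [Tree.weight, List.attach_map_val (f := Tree.weight μ)]

theorem nd_subst_ren (args args' : List (List (List Δ))) (f : ℕ × ℕ → ℕ × ℕ)
    (u : List (Δ ⊕ ℕ × ℕ))
    (h : ∀ p ∈ u.filterMap Sum.getRight?,
      (args'.getD (f p).1 []).getD (f p).2 [] = (args.getD p.1 []).getD p.2 []) :
    subst args' (u.map (Sum.map id f)) = subst args u := by
  induction u with
  | nil => rfl
  | cons a l ih =>
    cases a with
    | inl d =>
      have := ih h
      simp only [subst, List.map_cons, List.flatMap_cons] at this ⊢
      rw [this]; rfl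
    | inr p =>
      have := ih (fun q hq => h q (List.mem_cons_of_mem p hq))
      have h2 := h p List.mem_cons_self
      simp only [subst, List.map_cons, List.flatMap_cons] at this ⊢
      rw [this]
      congr 1

theorem ndConv_yield (M : ℕ) (hM : ∀ A, sortN A ≤ M) (code : Production Δ N sortN → T)
    (P : Set (Production Δ N sortN)) {A : N} {d : Tree (Production Δ N sortN)}
    (hd : WFDeriv P A d) : ∀ b : NDSel M,
      (ndConv M hM code b d).yield = b.1.map (fun j => d.yield.getD j []) := by
  induction hd with
  | node ρ ts hρ hlen hch ih =>
    intro b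
    rw [ndConv, nd_yield_node, nd_yield_node]
    change (ndComp M ρ b.1).map _ = _
    rw [ndComp, ndKeep, List.map_map, List.map_map]
    apply List.map_congr_left
    intro j hj
    have e : (ρ.comp.map (subst (ts.map Tree.yield))).getD j [] =
        subst (ts.map Tree.yield) (ρ.comp.getD j []) := by
      by_cases hj' : j < ρ.comp.length
      · simp [hj']
      · simp [not_lt.1 hj', subst]
    rw [e]
    apply nd_subst_ren
    rintro ⟨i, x⟩ hp
    have hkv : (i, x) ∈ ndKv ρ b.1 := by
      rw [ndKv, filterMap_flatten, List.mem_flatten]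
      exact ⟨_, List.mem_map_of_mem (List.mem_map_of_mem hj), hp⟩
    obtain ⟨h1, h2⟩ := ρ.wf _ ((ndKv_sublist M hM ρ b).subset hkv)
    have hi : i < ts.length := by rw [hlen]; exact h1
    have hx := (nd_mem_phi M hM ρ b i x).2 hkv
    have hl := List.idxOf_lt_length_of_mem hx
    have := ih i hi h1 (ndPhi M ρ b.1 i)
    simp only [List.get_eq_getElem] at this
    simp only [ndRen]
    simp [List.getElem?_append, hi, this, hl]

theorem ndConv_weight {A : Type} [CCSBimonoid A]
    (M : ℕ) (hM : ∀ A, sortN A ≤ M) (code : Production Δ N sortN → T)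
    (P : Set (Production Δ N sortN)) (μ : Production Δ N sortN → A)
    (μ' : Production Δ ((N × NDSel M) ⊕ T) (ndSort N M T) → A)
    (h1 : ∀ ρ ∈ P, ∀ b, μ' (ndProd M hM code ρ b) = μ ρ) (h2 : ∀ t, μ' (ndTag Δ N M t) = 1)
    {B : N} {d : Tree (Production Δ N sortN)}
    (hd : WFDeriv P B d) : ∀ b : NDSel M,
      (ndConv M hM code b d).weight μ' = d.weight μ := by
  induction hd with
  | node ρ ts hρ hlen hch ih =>
    intro b
    rw [ndConv, nd_weight_node, nd_weight_node, h1 ρ hρ]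
    congr 1
    rw [List.map_append, List.prod_append]
    have e1 : (List.map (Tree.weight μ') [Tree.node (ndTag Δ N M (code ρ)) []]).prod = 1 := by
      simp [nd_weight_node, h2]
    rw [e1, mul_one]
    congr 1
    apply List.ext_getElem
    · simp
    · intro i hi hi'
      have hi2 : i < ts.length := by simpa using hi
      simpa using ih i hi2 (hlen ▸ hi2) (ndPhi M ρ b.1 i)

theorem nd_bigSum_bij {A I I' : Type} [CCSBimonoid A] (D : Set I) (D' : Set I')
    (hD : D.Countable) (φ : I → I') (hφ : Set.BijOn φ D D') (f : I → A) (f' : I' → A)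
    (h : ∀ d ∈ D, f' (φ d) = f d) :
    CCSBimonoid.bigSum D' f' = CCSBimonoid.bigSum D f := by
  have : Countable D := hD.to_subtype
  have h1 := CCSBimonoid.bigSum_partition (A := A) (fun j : D => ({j.1} : Set I)) f (by
    intro j j' hj
    ext x
    simp only [Set.mem_inter_iff, Set.mem_singleton_iff, Set.mem_empty_iff_false, iff_false]
    rintro ⟨rfl, h⟩
    exact hj (Subtype.ext h))
  have h2 := CCSBimonoid.bigSum_partition (A := A) (fun j : D => ({φ j.1} : Set I')) f' (by
    intro j j' hj
    ext x
    simp only [Set.mem_inter_iff, Set.mem_singleton_iff, Set.mem_empty_iff_false, iff_false]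
    rintro ⟨rfl, h⟩
    exact hj (Subtype.ext (hφ.injOn j.2 j'.2 h)))
  have e1 : (⋃ j : D, ({j.1} : Set I)) = D := by ext; simp
  have e2 : (⋃ j : D, ({φ j.1} : Set I')) = D' := by
    rw [← hφ.image_eq]; ext; simp [eq_comm]
  rw [e1] at h1
  rw [e2] at h2
  rw [← h1, ← h2]
  congr 1
  funext j
  rw [CCSBimonoid.bigSum_singleton, CCSBimonoid.bigSum_singleton, h _ j.2]

/-- Trees of bounded depth over a set of labels. -/
def ndC {Q : Type} (P : Set Q) : ℕ → Set (Tree Q)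
  | 0 => ∅
  | n + 1 => Set.image2 Tree.node P {l | ∀ x ∈ l, x ∈ ndC P n}

theorem ndC_countable {Q : Type} (P : Set Q) (hP : P.Countable) (n : ℕ) :
    (ndC P n).Countable := by
  induction n with
  | zero => exact Set.countable_empty
  | succ n ih =>
    refine Set.Countable.image2 hP ?_ _
    have : Countable (ndC P n) := ih.to_subtype
    refine (Set.countable_range (List.map (Subtype.val : ndC P n → Tree Q))).mono ?_
    intro l hl
    exact ⟨l.pmap (fun x hx => ⟨x, hx⟩) hl, by simp [List.map_pmap]⟩

theorem nd_mem_C {P : Set (Production Δ N sortN)} (n : ℕ) :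
    ∀ (A : N) (d : Tree (Production Δ N sortN)), sizeOf d ≤ n → WFDeriv P A d →
      d ∈ ndC P n := by
  induction n with
  | zero =>
    intro A d h hd
    cases d
    simp at h
  | succ n ih =>
    intro A d h hd
    cases hd with
    | node ρ ts hρ hlen hch =>
      refine ⟨ρ, hρ, ts, ?_, rfl⟩
      intro x hx
      obtain ⟨i, hi, rfl⟩ := List.getElem_of_mem hx
      have h1 := List.sizeOf_lt_of_mem hx
      simp only [Tree.node.sizeOf_spec] at h
      exact ih _ _ (by omega) (hch i hi (hlen ▸ hi))

theorem nd_countable (P : Set (Production Δ N sortN)) (hP : P.Countable) (A : N) :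
    {d | WFDeriv P A d}.Countable :=
  (Set.countable_iUnion (ndC_countable P hP)).mono
    (fun d hd => Set.mem_iUnion.2 ⟨sizeOf d, nd_mem_C _ A d le_rfl hd⟩)

theorem nd_yield_length (P : Set (Production Δ N sortN)) {A : N}
    {d : Tree (Production Δ N sortN)} (hd : WFDeriv P A d) : d.yield.length = sortN A := by
  cases hd with
  | node ρ ts _ _ _ => rw [nd_yield_node, List.length_map, ρ.comp_len]

end NDAux

end CS

theorem CS.weighted_mcfg_nondeleting_normal_form
    (A : Type) [CS.CCSBimonoid A] (Δ : Type) (k : ℕ) (G : CS.WMCFG A Δ)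
    (hN : Finite G.N) (hP : G.P.Finite) (hfo : G.toMCFG.FanoutLE k) :
    ∃ G' : CS.WMCFG A Δ, Finite G'.N ∧ G'.P.Finite ∧ G'.toMCFG.FanoutLE k ∧
      G'.toMCFG.NonDeleting ∧ G'.sem = G.sem := by
  classical
  rcases Set.eq_empty_or_nonempty G.P with hE | ⟨ρ0, hρ0⟩
  · exact ⟨G, hN, hP, hfo, fun ρ hρ => by rw [hE] at hρ; exact hρ.elim, rfl⟩
  have h10 : (1 : A) ≠ 0 := by
    intro h
    apply G.μ_ne ρ0 hρ0
    rw [← one_mul (G.μ ρ0), h, CS.CCSBimonoid.zero_mul']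
  obtain ⟨M, hM⟩ : ∃ M, ∀ B, G.sortN B ≤ M := by
    obtain ⟨M, hM⟩ := (Set.finite_range G.sortN).bddAbove
    exact ⟨M, fun B => hM ⟨B, rfl⟩⟩
  have hM1 : 1 ≤ M := G.sort_S ▸ hM G.S
  have : Finite G.P := hP.to_subtype
  have : Finite (CS.NDSel M) := CS.NDSel.finite M
  let code : CS.Production Δ G.N G.sortN → Option G.P :=
    fun ρ => if h : ρ ∈ G.P then some ⟨ρ, h⟩ else none
  have hc : Set.InjOn code G.P := by
    intro ρ h ρ' h' e
    simpa [code, h, h'] using e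
  let b0 : CS.NDSel M := ⟨[0], by simpa using Nat.lt_of_succ_le hM1⟩
  let μ' : CS.Production Δ ((G.N × CS.NDSel M) ⊕ Option G.P) (CS.ndSort G.N M (Option G.P)) → A :=
    fun q => if h : ∃ ρ, ρ ∈ G.P ∧ ∃ b, q = CS.ndProd M hM code ρ b then G.μ h.choose else 1
  have hμ1 : ∀ ρ ∈ G.P, ∀ b, μ' (CS.ndProd M hM code ρ b) = G.μ ρ := by
    intro ρ hρ b
    have h : ∃ ρ', ρ' ∈ G.P ∧ ∃ b', CS.ndProd M hM code ρ b = CS.ndProd M hM code ρ' b' :=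
      ⟨ρ, hρ, b, rfl⟩
    simp only [μ']
    rw [dif_pos h]
    obtain ⟨h1, b', h2⟩ := h.choose_spec
    exact congrArg G.μ (hc hρ h1 (CS.ndProd_inj M hM code h2).1).symm
  have hμ2 : ∀ t, μ' (CS.ndTag Δ G.N M t) = 1 := by
    intro t
    simp only [μ']
    rw [dif_neg]
    rintro ⟨ρ, _, b, h⟩
    exact CS.ndProd_ne_ndTag M hM code ρ b t h.symm
  let G' : CS.WMCFG A Δ :=
    { N := (G.N × CS.NDSel M) ⊕ Option G.P
      sortN := CS.ndSort G.N M (Option G.P)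
      S := Sum.inl (G.S, b0)
      sort_S := rfl
      P := CS.ndP M hM code G.P
      μ := μ'
      μ_ne := by
        rintro q (⟨ρ, hρ, b, hb, rfl⟩ | ⟨t, rfl⟩)
        · rw [hμ1 ρ hρ]; exact G.μ_ne ρ hρ
        · rw [hμ2]; exact h10 }
  have hb0 : ∀ j ∈ b0.1, j < G.sortN G.S := by
    intro j hj
    rw [G.sort_S]
    simpa [b0] using hj
  refine ⟨G', ?_, ?_, ?_, ?_, ?_⟩
  · change Finite ((G.N × CS.NDSel M) ⊕ Option G.P)
    infer_instance
  · change (CS.ndP M hM code G.P).Finite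
    refine ((Set.Finite.image2 (CS.ndProd M hM code) hP (Set.finite_univ)).union
      (Set.finite_range (CS.ndTag Δ G.N M))).subset ?_
    rintro q (⟨ρ, hρ, b, hb, rfl⟩ | ⟨t, rfl⟩)
    · exact Or.inl ⟨ρ, hρ, b, trivial, rfl⟩
    · exact Or.inr ⟨t, rfl⟩
  · rintro q (⟨ρ, hρ, b, hb, rfl⟩ | ⟨t, rfl⟩)
    · refine le_trans ?_ (hfo ρ hρ)
      have hs : b.1.Subperm (List.range ρ.comp.length) :=
        (b.2.nodup List.nodup_range).subperm (fun j hj => by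
          rw [List.mem_range, ρ.comp_len]; exact hb j hj)
      simpa [CS.ndProd, CS.ndComp, CS.ndKeep] using hs.length_le
    · exact Nat.zero_le _
  · rintro q (⟨ρ, hρ, b, hb, rfl⟩ | ⟨t, rfl⟩)
    · exact CS.ndProd_nonDeleting M hM code ρ b
    · intro i h
      exact absurd h (Nat.not_lt_zero i)
  · funext w
    refine CS.nd_bigSum_bij _ _ ?_ (CS.ndConv M hM code b0) ⟨?_, ?_, ?_⟩ _ _ ?_
    · exact (CS.nd_countable G.P hP.countable G.S).mono (fun d hd => hd.1)
    · rintro d ⟨hd, hy⟩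
      refine ⟨CS.ndConv_wf M hM code G.P hd b0 hb0, ?_⟩
      rw [CS.ndConv_yield M hM code G.P hd, hy]
      rfl
    · rintro d ⟨hd, _⟩ d' ⟨hd', _⟩ e
      exact CS.ndConv_inj M hM code G.P hc hd _ _ hd' b0 e
    · rintro d' ⟨hd', hy⟩
      obtain ⟨d, hd, rfl⟩ := (CS.ndConv_surj M hM code G.P hd').1 _ _ rfl
      refine ⟨d, ⟨hd, ?_⟩, rfl⟩
      rw [CS.ndConv_yield M hM code G.P hd] at hy
      have hl := CS.nd_yield_length G.P hd
      rw [G.sort_S] at hl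
      obtain ⟨v, hv⟩ := List.length_eq_one_iff.1 hl
      rw [hv] at hy ⊢
      exact hy
    · rintro d ⟨hd, _⟩
      exact CS.ndConv_weight M hM code G.P G.μ μ' hμ1 hμ2 hd b0
end

section
/- Let 𝔓 be a partition of Σ and let u₁,…,u_k ∈ D(Σ) and v₁,…,v_ℓ ∈ D(Σ). If u₁⋯u_k ∈ mD_c(Σ,𝔓) and v₁⋯v_ℓ ∈ mD_c(Σ,𝔓), then for every permutation of the combined sequence u₁,…,u_k,v₁,…,v_ℓ, the concatenation of the permuted sequence is in mD_c(Σ,𝔓). -/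
namespace CS
namespace MDP

variable {S : Type}

/-- Pushdown run. -/
def Run : List S → List (S ⊕ S) → List S → Prop
  | st, [], st' => st = st'
  | st, Sum.inl σ :: w, st' => Run (σ :: st) w st'
  | st, Sum.inr σ :: w, st' => ∃ s1, st = σ :: s1 ∧ Run s1 w st'

lemma run_append (u v : List (S ⊕ S)) : ∀ st st' : List S,
    Run st (u ++ v) st' ↔ ∃ s1, Run st u s1 ∧ Run s1 v st' := by
  induction u with
  | nil => intro st st'; simp [Run]
  | cons a u ih =>
    intro st st'
    cases a with
    | inl σ => simp [Run, ih]
    | inr σ =>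
      simp only [List.cons_append, Run, ih]
      constructor
      · rintro ⟨s1, h, s2, h1, h2⟩; exact ⟨s2, ⟨s1, h, h1⟩, h2⟩
      · rintro ⟨s2, ⟨s1, h, h1⟩, h2⟩; exact ⟨s1, h, s2, h1, h2⟩

lemma run_of_rel {u v : List (S ⊕ S)} (h : DyckRel S u v) :
    ∀ st st' : List S, Run st u st' ↔ Run st v st' := by
  induction h with
  | cancel σ => intro st st'; simp [Run]
  | refl w => intro st st'; rfl
  | symm _ ih => intro st st'; exact (ih st st').symm
  | trans _ _ ih1 ih2 => intro st st'; exact (ih1 st st').trans (ih2 st st')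
  | append _ _ ih1 ih2 => intro st st'; simp only [run_append, ih1, ih2]

lemma rel_of_run (w : List (S ⊕ S)) : ∀ st st' : List S, Run st w st' →
    DyckRel S (st.reverse.map Sum.inl ++ w) (st'.reverse.map Sum.inl) := by
  induction w with
  | nil => intro st st' h; cases h; simpa using DyckRel.refl _
  | cons a w ih =>
    intro st st' h
    cases a with
    | inl σ => simpa using ih _ _ h
    | inr σ =>
      obtain ⟨s1, rfl, h⟩ := h
      refine DyckRel.trans ?_ (ih _ _ h)
      have := DyckRel.append (DyckRel.refl (s1.reverse.map Sum.inl))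
        (DyckRel.append (DyckRel.cancel σ) (DyckRel.refl w))
      simpa using this

lemma dyck_iff {w : List (S ⊕ S)} : w ∈ DyckLang S ↔ Run [] w [] := by
  constructor
  · intro h; exact (run_of_rel h [] []).2 rfl
  · intro h; show DyckRel S w []; simpa using rel_of_run w [] [] h

lemma dyck_run {w : List (S ⊕ S)} (h : w ∈ DyckLang S) (st st' : List S) :
    Run st w st' ↔ st = st' := run_of_rel h st st'

lemma dyck_nil : ([] : List (S ⊕ S)) ∈ DyckLang S := DyckRel.refl _

lemma dyck_append {u v : List (S ⊕ S)} (hu : u ∈ DyckLang S) (hv : v ∈ DyckLang S) :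
    u ++ v ∈ DyckLang S := DyckRel.append hu hv

lemma dyck_flatten {l : List (List (S ⊕ S))} (h : ∀ u ∈ l, u ∈ DyckLang S) :
    l.flatten ∈ DyckLang S := by
  induction l with
  | nil => exact dyck_nil
  | cons a l ih =>
    rw [List.flatten_cons]
    exact dyck_append (h a (by simp)) (ih fun u hu => h u (by simp [hu]))

/-- Bracketing. -/
def br (σ : S) (v : List (S ⊕ S)) : List (S ⊕ S) := Sum.inl σ :: v ++ [Sum.inr σ]

/-- Prime Dyck words. -/
def Prim (p : List (S ⊕ S)) : Prop := ∃ σ v, v ∈ DyckLang S ∧ p = br σ v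

lemma dyck_br (σ : S) {v : List (S ⊕ S)} (hv : v ∈ DyckLang S) : br σ v ∈ DyckLang S := by
  have h : DyckRel S ([Sum.inl σ] ++ (v ++ [Sum.inr σ])) ([Sum.inl σ] ++ ([] ++ [Sum.inr σ])) :=
    .append (.refl _) (.append hv (.refl _))
  exact DyckRel.trans h (DyckRel.cancel σ)

lemma Prim.dyck {p : List (S ⊕ S)} (h : Prim p) : p ∈ DyckLang S := by
  obtain ⟨σ, v, hv, rfl⟩ := h; exact dyck_br σ hv

/-- Decomposition along a stack. -/
def Dec : List S → List (S ⊕ S) → Prop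
  | [], w => ∃ l : List (List (S ⊕ S)), (∀ p ∈ l, Prim p) ∧ l.flatten = w
  | σ :: st, w => ∃ v w', v ∈ DyckLang S ∧ w = v ++ Sum.inr σ :: w' ∧ Dec st w'

lemma dec_prim {p : List (S ⊕ S)} (hp : Prim p) {st : List S} {w : List (S ⊕ S)}
    (h : Dec st w) : Dec st (p ++ w) := by
  cases st with
  | nil =>
    obtain ⟨l, hl, rfl⟩ := h
    exact ⟨p :: l, by simpa using ⟨hp, hl⟩, by simp⟩
  | cons τ st =>
    obtain ⟨v, w', hv, rfl, h⟩ := h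
    exact ⟨p ++ v, w', dyck_append hp.dyck hv, by simp, h⟩

lemma dec_of_run (w : List (S ⊕ S)) : ∀ st : List S, Run st w [] → Dec st w := by
  induction w with
  | nil => intro st h; cases h; exact ⟨[], by simp, rfl⟩
  | cons a w ih =>
    intro st h
    cases a with
    | inl σ =>
      obtain ⟨v, w', hv, rfl, h'⟩ := ih _ h
      have := dec_prim ⟨σ, v, hv, rfl⟩ h'
      simpa [br] using this
    | inr σ =>
      obtain ⟨s1, rfl, h⟩ := h
      exact ⟨[], w, dyck_nil, rfl, ih _ h⟩

lemma exists_primes {w : List (S ⊕ S)} (h : w ∈ DyckLang S) :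
    ∃ l : List (List (S ⊕ S)), (∀ p ∈ l, Prim p) ∧ l.flatten = w :=
  dec_of_run w [] (dyck_iff.1 h)

lemma first_unique {v v' w w' : List (S ⊕ S)} {σ τ : S} (hv : v ∈ DyckLang S)
    (hv' : v' ∈ DyckLang S) (h : v ++ Sum.inr σ :: w = v' ++ Sum.inr τ :: w') :
    v = v' ∧ w = w' := by
  have key : ∀ {v v' c : List (S ⊕ S)} {σ : S}, v ∈ DyckLang S → v' ∈ DyckLang S →
      v ≠ v' ++ Sum.inr σ :: c := by
    rintro v v' c σ hv hv' rfl
    have := dyck_iff.1 hv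
    rw [run_append] at this
    obtain ⟨s1, h1, h2⟩ := this
    rw [dyck_run hv'] at h1
    subst h1
    obtain ⟨_, h, _⟩ := h2
    cases h
  rcases List.append_eq_append_iff.1 h with ⟨a, h1, h2⟩ | ⟨a, h1, h2⟩
  · cases a with
    | nil => simp at h1 h2; exact ⟨h1.symm, h2.2⟩
    | cons b a =>
      simp at h2
      obtain ⟨rfl, _⟩ := h2
      exact absurd h1 (key hv' hv)
  · cases a with
    | nil => simp at h1 h2; exact ⟨h1, h2.2.symm⟩
    | cons b a =>
      simp at h2
      obtain ⟨rfl, _⟩ := h2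
      exact absurd h1 (key hv hv')

lemma primes_unique : ∀ l l' : List (List (S ⊕ S)), (∀ p ∈ l, Prim p) → (∀ p ∈ l', Prim p) →
    l.flatten = l'.flatten → l = l' := by
  intro l
  induction l with
  | nil =>
    intro l' _ h' h
    cases l' with
    | nil => rfl
    | cons p l' =>
      obtain ⟨σ, v, hv, rfl⟩ := h' p (by simp)
      simp [br] at h
  | cons p l ih =>
    intro l' hl h' h
    obtain ⟨σ, v, hv, rfl⟩ := hl p (by simp)
    cases l' with
    | nil => simp [br] at h
    | cons p' l' =>
      obtain ⟨σ', v', hv', rfl⟩ := h' p' (by simp)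
      simp only [br, List.flatten_cons, List.cons_append, List.append_assoc, List.cons.injEq,
        Sum.inl.injEq, List.nil_append] at h
      obtain ⟨rfl, h⟩ := h
      obtain ⟨rfl, h9⟩ := first_unique hv hv' h
      rw [ih l' (fun p hp => hl p (by simp [hp])) (fun p hp => h' p (by simp [hp])) h9]

lemma ctx_left (x : List (S ⊕ S)) : ∀ (st : List S) (σ : S), Run [] x (st ++ [σ]) →
    ∃ p q, x = p ++ Sum.inl σ :: q ∧ p ∈ DyckLang S ∧ Run [] q st := by
  induction x using List.reverseRecOn with
  | nil => intro st σ h; simp [Run] at h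
  | append_singleton x a ih =>
    intro st σ h
    rw [run_append] at h
    obtain ⟨s1, h1, h2⟩ := h
    cases a with
    | inl τ =>
      simp only [Run] at h2
      cases st with
      | nil =>
        simp at h2
        obtain ⟨rfl, rfl⟩ := h2
        exact ⟨x, [], rfl, dyck_iff.2 h1, rfl⟩
      | cons a st =>
        simp at h2
        obtain ⟨rfl, rfl⟩ := h2
        obtain ⟨p, q, rfl, hp, hq⟩ := ih _ _ h1
        exact ⟨p, q ++ [Sum.inl τ], by simp, hp, (run_append _ _ _ _).2 ⟨_, hq, rfl⟩⟩
    | inr τ =>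
      obtain ⟨s2, rfl, h2⟩ := h2
      cases h2
      obtain ⟨p, q, rfl, hp, hq⟩ := ih (τ :: st) σ h1
      exact ⟨p, q ++ [Sum.inr τ], by simp, hp, (run_append _ _ _ _).2 ⟨_, hq, _, rfl, rfl⟩⟩

lemma ctx_right (y : List (S ⊕ S)) : ∀ (st : List S) (σ : S), Run (st ++ [σ]) y [] →
    ∃ r s, y = r ++ Sum.inr σ :: s ∧ s ∈ DyckLang S ∧ Run st r [] := by
  induction y with
  | nil => intro st σ h; simp [Run] at h
  | cons a y ih =>
    intro st σ h
    cases a with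
    | inl τ =>
      obtain ⟨r, s, rfl, hs, hr⟩ := ih (τ :: st) σ h
      exact ⟨Sum.inl τ :: r, s, rfl, hs, hr⟩
    | inr τ =>
      obtain ⟨s1, h1, h2⟩ := h
      cases st with
      | nil =>
        simp at h1
        obtain ⟨rfl, rfl⟩ := h1
        exact ⟨[], y, rfl, dyck_iff.2 h2, rfl⟩
      | cons a st =>
        simp at h1
        obtain ⟨rfl, rfl⟩ := h1
        obtain ⟨r, s, rfl, hs, hr⟩ := ih st σ h2
        exact ⟨Sum.inr a :: r, s, rfl, hs, st, rfl, hr⟩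

lemma ctx {x U y : List (S ⊕ S)} (hU : U ∈ DyckLang S) (h : x ++ U ++ y ∈ DyckLang S) :
    (x ∈ DyckLang S ∧ y ∈ DyckLang S) ∨
    ∃ p σ q r s, x = p ++ Sum.inl σ :: q ∧ y = r ++ Sum.inr σ :: s ∧ p ∈ DyckLang S ∧
      s ∈ DyckLang S ∧ ∀ V ∈ DyckLang S, q ++ V ++ r ∈ DyckLang S := by
  rw [dyck_iff, run_append] at h
  obtain ⟨s2, h, hy⟩ := h
  rw [run_append] at h
  obtain ⟨s1, hx, h⟩ := h
  rw [dyck_run hU] at h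
  subst h
  rcases List.eq_nil_or_concat s1 with rfl | ⟨st, σ, rfl⟩
  · exact .inl ⟨dyck_iff.2 hx, dyck_iff.2 hy⟩
  · rw [List.concat_eq_append] at *
    obtain ⟨p, q, rfl, hp, hq⟩ := ctx_left _ _ _ hx
    obtain ⟨r, s, rfl, hs, hr⟩ := ctx_right _ _ _ hy
    refine .inr ⟨p, σ, q, r, s, rfl, rfl, hp, hs, fun V hV => dyck_iff.2 ?_⟩
    exact (run_append _ _ _ _).2 ⟨_, (run_append _ _ _ _).2 ⟨_, hq, (dyck_run hV _ _).2 rfl⟩, hr⟩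

variable {P : Set (Set S)}

/-- All permutations of the prime factors stay in the language. -/
def Phi (P : Set (Set S)) (w : List (S ⊕ S)) : Prop :=
  ∃ l : List (List (S ⊕ S)), (∀ p ∈ l, Prim p) ∧ l.flatten = w ∧
    ∀ l' : List (List (S ⊕ S)), l'.Perm l → MDyckRel S P l'.flatten []

lemma Phi.spec {l : List (List (S ⊕ S))} (h : Phi P l.flatten) (hl : ∀ p ∈ l, Prim p)
    {l' : List (List (S ⊕ S))} (hp : l'.Perm l) : MDyckRel S P l'.flatten [] := by
  obtain ⟨m, hm, he, h⟩ := h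
  obtain rfl := primes_unique _ _ hm hl he
  exact h _ hp

open Classical in
/-- The prime factors. -/
noncomputable def pr (w : List (S ⊕ S)) : List (List (S ⊕ S)) :=
  if h : w ∈ DyckLang S then (exists_primes h).choose else []

lemma pr_prim (w : List (S ⊕ S)) : ∀ p ∈ pr w, Prim p := by
  unfold pr
  split
  · next h => exact (exists_primes h).choose_spec.1
  · simp

lemma pr_flatten {w : List (S ⊕ S)} (h : w ∈ DyckLang S) : (pr w).flatten = w := by
  unfold pr
  rw [dif_pos h]
  exact (exists_primes h).choose_spec.2

lemma flatMap_pr {us : List (List (S ⊕ S))} (hus : ∀ u ∈ us, u ∈ DyckLang S) :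
    (us.flatMap pr).flatten = us.flatten := by
  induction us with
  | nil => rfl
  | cons a l ih =>
    simp only [List.flatMap_cons, List.flatten_append, List.flatten_cons]
    rw [pr_flatten (hus a (by simp)), ih fun u hu => hus u (by simp [hu])]

lemma flatMap_prim (us : List (List (S ⊕ S))) : ∀ p ∈ us.flatMap pr, Prim p := by
  intro p hp
  obtain ⟨u, _, h⟩ := List.mem_flatMap.1 hp
  exact pr_prim u p h

lemma Phi.perm {us ws : List (List (S ⊕ S))} (h : Phi P us.flatten)
    (hus : ∀ u ∈ us, u ∈ DyckLang S) (hp : ws.Perm us) : MDyckRel S P ws.flatten [] := by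
  rw [← flatMap_pr hus] at h
  rw [← flatMap_pr fun u hu => hus u (hp.subset hu)]
  exact h.spec (flatMap_prim us) (hp.flatMap_right pr)

lemma perm_map_lift {α β : Type} (f : α → β) {l' l : List β} (h : l'.Perm l) :
    ∀ A : List α, A.map f = l → ∃ A' : List α, A'.Perm A ∧ A'.map f = l' := by
  induction h with
  | nil => intro A hA; exact ⟨A, .refl _, hA⟩
  | cons x _ ih =>
    intro A hA
    obtain ⟨a, A, rfl, rfl, rfl⟩ := List.map_eq_cons_iff.1 hA
    obtain ⟨A', h1, h2⟩ := ih A rfl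
    exact ⟨a :: A', h1.cons a, by simp [h2]⟩
  | swap x y l =>
    intro A hA
    obtain ⟨a, A, rfl, rfl, hA1⟩ := List.map_eq_cons_iff.1 hA
    obtain ⟨b, A, rfl, rfl, rfl⟩ := List.map_eq_cons_iff.1 hA1
    exact ⟨b :: a :: A, .swap _ _ _, rfl⟩
  | trans _ _ ih1 ih2 =>
    intro A hA
    obtain ⟨A1, h1, h2⟩ := ih2 A hA
    obtain ⟨A2, h3, h4⟩ := ih1 A1 h2
    exact ⟨A2, h3.trans h1, h4⟩

lemma tag_struct {T W : Type} (f : T → W) (A : List (T ⊕ W)) :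
    ∃ (d0 : List W) (ks : List (T × List W)),
      A.map (Sum.elim f id) = d0 ++ ks.flatMap (fun k => f k.1 :: k.2) ∧
      A.filterMap Sum.getLeft? = ks.map Prod.fst ∧
      A.filterMap Sum.getRight? = d0 ++ ks.flatMap Prod.snd := by
  induction A with
  | nil => exact ⟨[], [], rfl, rfl, rfl⟩
  | cons a A ih =>
    obtain ⟨d0, ks, h1, h2, h3⟩ := ih
    cases a with
    | inl t => exact ⟨[], (t, d0) :: ks, by simp [h1],
        by simp [List.filterMap_cons, h2], by simp [List.filterMap_cons, h3]⟩
    | inr w => exact ⟨w :: d0, ks, by simp [h1],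
        by simp [List.filterMap_cons, h2], by simp [List.filterMap_cons, h3]⟩

lemma interleave {T W : Type} (f : T → W) {l' : List W} {ts : List T} {L : List W}
    (h : l'.Perm (ts.map f ++ L)) :
    ∃ (d0 : List W) (ks : List (T × List W)),
      l' = d0 ++ ks.flatMap (fun k => f k.1 :: k.2) ∧
      (ks.map Prod.fst).Perm ts ∧ (d0 ++ ks.flatMap Prod.snd).Perm L := by
  obtain ⟨A, hA, rfl⟩ := perm_map_lift (Sum.elim f id) h (ts.map Sum.inl ++ L.map Sum.inr)
    (by simp [Function.comp_def])
  obtain ⟨d0, ks, h1, h2, h3⟩ := tag_struct f A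
  refine ⟨d0, ks, h1, ?_, ?_⟩
  · rw [← h2]
    have := hA.filterMap Sum.getLeft?
    simpa [List.filterMap_append, List.filterMap_map, Function.comp_def] using this
  · rw [← h3]
    have := hA.filterMap Sum.getRight?
    simpa [List.filterMap_append, List.filterMap_map, Function.comp_def] using this

lemma cancel_perm (ts : List (S × List (S ⊕ S)))
    (hnd : (ts.map Prod.fst).Nodup) (hP : {σ | σ ∈ ts.map Prod.fst} ∈ P)
    (hts : ∀ t ∈ ts, t.2 ∈ DyckLang S) (hphi : Phi P (ts.map Prod.snd).flatten)
    {L : List (List (S ⊕ S))} (hL : ∀ p ∈ L, p ∈ DyckLang S) {l' : List (List (S ⊕ S))}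
    (h : l'.Perm (ts.map (fun t => br t.1 t.2) ++ L)) :
    ∃ l2 : List (List (S ⊕ S)), l2.Perm L ∧ MDyckRel S P l'.flatten l2.flatten := by
  obtain ⟨d0, ks, rfl, h1, h2⟩ := interleave (fun t : S × List (S ⊕ S) => br t.1 t.2) h
  refine ⟨_, h2, ?_⟩
  have hd : ∀ p ∈ d0 ++ ks.flatMap Prod.snd, p ∈ DyckLang S := fun p hp => hL p (h2.subset hp)
  have key := MDyckRel.cancel (P := P) d0.flatten
    (ks.map fun k => (k.1.1, k.1.2, k.2.flatten)) ?_ ?_ ?_ ?_ ?_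
  · have e1 : ∀ ks : List ((S × List (S ⊕ S)) × List (List (S ⊕ S))),
        ((ks.map fun k => (k.1.1, k.1.2, k.2.flatten)).map
          (fun t => Sum.inl t.1 :: t.2.1 ++ [Sum.inr t.1] ++ t.2.2)).flatten =
        (ks.flatMap (fun k => br k.1.1 k.1.2 :: k.2)).flatten := by
      intro ks
      induction ks with
      | nil => rfl
      | cons k ks ih => simp at ih; simp [ih, br]
    have e2 : ∀ ks : List ((S × List (S ⊕ S)) × List (List (S ⊕ S))),
        ((ks.map fun k => (k.1.1, k.1.2, k.2.flatten)).map (fun t => t.2.2)).flatten =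
        (ks.flatMap Prod.snd).flatten := by
      intro ks
      induction ks with
      | nil => rfl
      | cons k ks ih => simp at ih; simp [ih]
    rw [e1, e2] at key
    rw [List.flatten_append, List.flatten_append]
    exact key
  · have := (h1.map Prod.fst).nodup_iff.2 hnd
    simpa [Function.comp_def] using this
  · have : {σ | σ ∈ (ks.map fun k => (k.1.1, k.1.2, k.2.flatten)).map Prod.fst} =
        {σ | σ ∈ ts.map Prod.fst} := by
      ext σ
      have := (h1.map Prod.fst).mem_iff (a := σ)
      simpa [Function.comp_def] using this
    rw [this]; exact hP
  · exact dyck_flatten fun u hu => hd u (by simp [hu])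
  · intro t ht
    obtain ⟨k, hk, rfl⟩ := List.mem_map.1 ht
    refine ⟨hts _ (h1.subset (List.mem_map_of_mem hk)), dyck_flatten fun u hu => hd u ?_⟩
    exact List.mem_append_right _ (List.mem_flatMap.2 ⟨k, hk, hu⟩)
  · have := hphi.perm (by simpa using fun v σ h => hts (σ, v) h) (h1.map Prod.snd)
    simpa [Function.comp_def] using this

lemma dyck_of_mrel {u v : List (S ⊕ S)} (h : MDyckRel S P u v) : DyckRel S u v := by
  induction h with
  | refl w => exact .refl _
  | symm _ ih => exact ih.symm
  | trans _ _ ih1 ih2 => exact ih1.trans ih2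
  | append _ _ ih1 ih2 => exact ih1.append ih2
  | cancel u0 ts _ _ h0 ht _ _ =>
    refine DyckRel.trans (v := []) ?_ (DyckRel.symm ?_)
    · refine dyck_append h0 (dyck_flatten fun u hu => ?_)
      obtain ⟨t, h, rfl⟩ := List.mem_map.1 hu
      exact dyck_append (dyck_br t.1 (ht t h).1) (ht t h).2
    · refine dyck_append h0 (dyck_flatten fun u hu => ?_)
      obtain ⟨t, h, rfl⟩ := List.mem_map.1 hu
      exact (ht t h).2

lemma perm_replace {α : Type} {a : List α} {A B : List (List α)} {l' : List (List α)}
    (h : l'.Perm (A ++ a :: B)) (b : List α) :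
    ∃ c d, l' = c ++ a :: d ∧ (c ++ b :: d).Perm (A ++ b :: B) := by
  obtain ⟨c, d, rfl⟩ := List.append_of_mem (h.symm.subset (by simp : a ∈ A ++ a :: B))
  refine ⟨c, d, rfl, ?_⟩
  have h1 : (c ++ d).Perm (A ++ B) :=
    (List.perm_cons a).1 ((List.perm_middle.symm.trans h).trans List.perm_middle)
  exact (List.perm_middle.trans (h1.cons b)).trans List.perm_middle.symm

lemma phi_inner {p q r s U V : List (S ⊕ S)} {σ : S} (hp : p ∈ DyckLang S)
    (hs : s ∈ DyckLang S) (hq : ∀ V ∈ DyckLang S, q ++ V ++ r ∈ DyckLang S)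
    (hU : U ∈ DyckLang S) (hV : V ∈ DyckLang S) (h : MDyckRel S P U V)
    (hphi : Phi P ((p ++ Sum.inl σ :: q) ++ U ++ (r ++ Sum.inr σ :: s))) :
    Phi P ((p ++ Sum.inl σ :: q) ++ V ++ (r ++ Sum.inr σ :: s)) := by
  have e : ∀ W : List (S ⊕ S), (p ++ Sum.inl σ :: q) ++ W ++ (r ++ Sum.inr σ :: s) =
      (pr p ++ br σ (q ++ W ++ r) :: pr s).flatten := by
    intro W
    simp [pr_flatten hp, pr_flatten hs, br]
  have hprim : ∀ W ∈ DyckLang S, ∀ w ∈ pr p ++ br σ (q ++ W ++ r) :: pr s, Prim w := by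
    intro W hW w hw
    rcases List.mem_append.1 hw with hw | hw
    · exact pr_prim _ _ hw
    · rcases List.mem_cons.1 hw with rfl | hw
      · exact ⟨σ, _, hq W hW, rfl⟩
      · exact pr_prim _ _ hw
  rw [e] at hphi
  refine ⟨_, hprim V hV, (e V).symm, fun l' hl' => ?_⟩
  obtain ⟨c, d, rfl, h2⟩ := perm_replace hl' (br σ (q ++ U ++ r))
  refine MDyckRel.trans ?_ (hphi.spec (hprim U hU) h2)
  have : MDyckRel S P (br σ (q ++ V ++ r)) (br σ (q ++ U ++ r)) :=
    .append (u := [Sum.inl σ] ++ (q ++ V ++ r)) (v := [Sum.inl σ] ++ (q ++ U ++ r))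
      (.append (.refl _) (.append (.append (.refl _) h.symm) (.refl _))) (.refl _)
  simp only [List.flatten_append, List.flatten_cons]
  exact .append (.refl _) (.append this (.refl _))

lemma top_perm {S' : Type} {W : Type} (f : S' → W) (g : S' → List W) (X Y Z : List W)
    (ts : List S') : (X ++ (Y ++ ts.flatMap (fun t => f t :: g t)) ++ Z).Perm
      (ts.map f ++ (X ++ (Y ++ ts.flatMap g) ++ Z)) := by
  have h : (ts.flatMap (fun t => f t :: g t)).Perm (ts.map f ++ ts.flatMap g) := by
    induction ts with
    | nil => simp
    | cons t ts ih =>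
      simp only [List.flatMap_cons, List.map_cons, List.cons_append]
      refine List.Perm.cons _ ((ih.append_left _).trans ?_)
      rw [← List.append_assoc, ← List.append_assoc]
      exact List.perm_append_comm.append_right _
  refine (((h.append_left Y).append_left X).append_right Z).trans ?_
  rw [← Multiset.coe_eq_coe]
  simp only [← Multiset.coe_add]
  abel

lemma phi_iff {u v : List (S ⊕ S)} (h : MDyckRel S P u v) :
    ∀ x y : List (S ⊕ S), x ++ u ++ y ∈ DyckLang S →
      (Phi P (x ++ u ++ y) ↔ Phi P (x ++ v ++ y)) := by
  induction h with
  | refl w => intro x y _; rfl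
  | symm h ih =>
    intro x y hd
    refine (ih x y ?_).symm
    exact DyckRel.trans (.append (.append (.refl _) (dyck_of_mrel h)) (.refl _)) hd
  | trans h _ ih1 ih2 =>
    intro x y hd
    refine (ih1 x y hd).trans (ih2 x y ?_)
    exact DyckRel.trans (.append (.append (.refl _) (dyck_of_mrel h).symm) (.refl _)) hd
  | @append u v u' v' h h' ih1 ih2 =>
    intro x y hd
    have a := ih1 x (u' ++ y) (by simpa using hd)
    have b := ih2 (x ++ v) y (by
      have : DyckRel S (x ++ v ++ u' ++ y) (x ++ u ++ u' ++ y) :=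
        .append (.append (.append (.refl _) (dyck_of_mrel h).symm) (.refl _)) (.refl _)
      have hd' : DyckRel S (x ++ (u ++ u') ++ y) [] := hd
      exact this.trans (by simpa using hd'))
    simp only [List.append_assoc] at a b ⊢
    exact a.trans b
  | cancel u0 ts hnd hP h0 ht hv ih =>
    intro x y hd
    have hm := MDyckRel.cancel u0 ts hnd hP h0 ht hv
    have hphi : Phi P (ts.map (fun t => t.2.1)).flatten := by
      have hdy : (ts.map (fun t => t.2.1)).flatten ∈ DyckLang S := dyck_of_mrel hv
      have := ih [] [] (by simpa using hdy)
      simp only [List.nil_append, List.append_nil] at this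
      rw [this]
      refine ⟨[], by simp, rfl, fun l' hl' => ?_⟩
      rw [hl'.eq_nil]; exact .refl _
    have hV : (u0 ++ (ts.map (fun t => t.2.2)).flatten) ∈ DyckLang S := by
      refine dyck_append h0 (dyck_flatten fun u hu => ?_)
      obtain ⟨t, h, rfl⟩ := List.mem_map.1 hu
      exact (ht t h).2
    have hU := DyckRel.trans (dyck_of_mrel hm) hV
    rcases ctx hU hd with ⟨hx, hy⟩ | ⟨p, σ, q, r, s, rfl, rfl, hp, hs, hq⟩
    · set f : S × List (S ⊕ S) × List (S ⊕ S) → List (S ⊕ S) := fun t => br t.1 t.2.1 with hf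
      set g : S × List (S ⊕ S) × List (S ⊕ S) → List (List (S ⊕ S)) := fun t => pr t.2.2 with hg
      have e1 : x ++ (u0 ++ (ts.map (fun t => Sum.inl t.1 :: t.2.1 ++ [Sum.inr t.1] ++ t.2.2)).flatten)
          ++ y = (pr x ++ (pr u0 ++ ts.flatMap (fun t => f t :: g t)) ++ pr y).flatten := by
        have : ∀ ts : List (S × List (S ⊕ S) × List (S ⊕ S)),
            (∀ t ∈ ts, t.2.1 ∈ DyckLang S ∧ t.2.2 ∈ DyckLang S) →
            (ts.map (fun t => Sum.inl t.1 :: t.2.1 ++ [Sum.inr t.1] ++ t.2.2)).flatten =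
            (ts.flatMap (fun t => f t :: g t)).flatten := by
          intro ts ht
          induction ts with
          | nil => rfl
          | cons t ts ih =>
            rw [List.map_cons, List.flatten_cons, ih fun t h => ht t (by simp [h])]
            simp [hf, hg, br, pr_flatten (ht t (by simp)).2]
        rw [this ts ht]
        simp only [List.flatten_append, pr_flatten hx, pr_flatten hy, pr_flatten h0]
      have e2 : x ++ (u0 ++ (ts.map (fun t => t.2.2)).flatten) ++ y =
          (pr x ++ (pr u0 ++ ts.flatMap g) ++ pr y).flatten := by
        have : ∀ ts : List (S × List (S ⊕ S) × List (S ⊕ S)),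
            (∀ t ∈ ts, t.2.1 ∈ DyckLang S ∧ t.2.2 ∈ DyckLang S) →
            (ts.map (fun t => t.2.2)).flatten = (ts.flatMap g).flatten := by
          intro ts ht
          induction ts with
          | nil => rfl
          | cons t ts ih =>
            rw [List.map_cons, List.flatten_cons, ih fun t h => ht t (by simp [h])]
            simp [hg, pr_flatten (ht t (by simp)).2]
        rw [this ts ht]
        simp only [List.flatten_append, pr_flatten hx, pr_flatten hy, pr_flatten h0]
      have hperm := top_perm f g (pr x) (pr u0) (pr y) ts
      have p2 : ∀ w ∈ pr x ++ (pr u0 ++ ts.flatMap g) ++ pr y, Prim w := by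
        intro w hw
        simp only [List.mem_append, List.mem_flatMap] at hw
        rcases hw with (hw | hw | ⟨t, _, hw⟩) | hw
        all_goals exact pr_prim _ _ hw
      have p1 : ∀ w ∈ pr x ++ (pr u0 ++ ts.flatMap (fun t => f t :: g t)) ++ pr y, Prim w := by
        intro w hw
        rcases List.mem_append.1 (hperm.subset hw) with hw | hw
        · obtain ⟨t, h, rfl⟩ := List.mem_map.1 hw
          exact ⟨_, _, (ht t h).1, rfl⟩
        · exact p2 w hw
      have cp := fun {L l'} => cancel_perm (P := P) (ts.map fun t => (t.1, t.2.1))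
        (by simpa [Function.comp_def] using hnd) (by
          have : {σ | σ ∈ (ts.map fun t => (t.1, t.2.1)).map Prod.fst} =
              {σ | σ ∈ ts.map Prod.fst} := by simp [Function.comp_def]
          rw [this]; exact hP)
        (by
          intro t h
          obtain ⟨t, h9, rfl⟩ := List.mem_map.1 h
          exact (ht t h9).1)
        (by simpa [Function.comp_def] using hphi) (L := L) (l' := l')
      have emap : (ts.map fun t => (t.1, t.2.1)).map (fun t => br t.1 t.2) = ts.map f := by
        simp [hf, Function.comp_def]
      rw [emap] at cp
      rw [e1, e2]
      constructor
      · intro hphi1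
        refine ⟨_, p2, rfl, fun l' hl' => ?_⟩
        have h1 := hphi1.spec p1 ((hl'.append_left (ts.map f)).trans hperm.symm)
        obtain ⟨l2, hl2, h2⟩ := cp (L := []) (l' := ts.map f) (by simp) (by simp)
        rw [hl2.eq_nil] at h2
        rw [List.flatten_append] at h1
        exact (MDyckRel.append h2 (.refl l'.flatten)).symm.trans h1
      · intro hphi2
        refine ⟨_, p1, rfl, fun l' hl' => ?_⟩
        obtain ⟨l2, hl2, h2⟩ := cp (fun p h => (p2 p h).dyck) (hl'.trans hperm)
        exact h2.trans (hphi2.spec p2 hl2)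
    · exact ⟨phi_inner hp hs hq hU hV hm, phi_inner hp hs hq hV hU hm.symm⟩

lemma phi_of_mem {w : List (S ⊕ S)} (h : MDyckRel S P w []) : Phi P w := by
  have hd : w ∈ DyckLang S := dyck_of_mrel h
  have := phi_iff h [] [] (by simpa using hd)
  simp only [List.nil_append, List.append_nil] at this
  rw [this]
  refine ⟨[], by simp, rfl, fun l' hl' => ?_⟩
  rw [hl'.eq_nil]; exact .refl _

end MDP
end CS

/-- Let `𝔓` be a partition of `Σ`, `u₁, …, u_k ∈ D(Σ)` and
`v₁, …, v_ℓ ∈ D(Σ)`.  If `u₁⋯u_k ∈ mD_c(Σ,𝔓)` and `v₁⋯v_ℓ ∈ mD_c(Σ,𝔓)`, then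
the concatenation of every permutation of `u₁, …, u_k, v₁, …, v_ℓ` is in
`mD_c(Σ,𝔓)`. -/
theorem CS.mDyck_permutation (S : Type) (Pa : Set (Set S))
    (hPa : Setoid.IsPartition Pa) (us vs : List (List (S ⊕ S)))
    (hus : ∀ u ∈ us, u ∈ CS.DyckLang S) (hvs : ∀ v ∈ vs, v ∈ CS.DyckLang S)
    (hu : us.flatten ∈ CS.MDyckLang S Pa) (hv : vs.flatten ∈ CS.MDyckLang S Pa) :
    ∀ ws : List (List (S ⊕ S)), ws.Perm (us ++ vs) →
      ws.flatten ∈ CS.MDyckLang S Pa := by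
  intro ws hws
  refine (CS.MDP.phi_of_mem ?_).perm (us := us ++ vs) ?_ hws
  · rw [List.flatten_append]
    exact CS.MDyckRel.append hu hv
  · intro u h
    rcases List.mem_append.1 h with h | h
    · exact hus u h
    · exact hvs u h
end

section
/- For every partition 𝔓 of Σ, every member of the congruence multiple Dyck language is a Dyck word: mD_c(Σ,𝔓) ⊆ D(Σ). -/
theorem CS.MDyckRel.toDyck {S : Type} {P : Set (Set S)} {u v : List (S ⊕ S)}
    (h : CS.MDyckRel S P u v) : CS.DyckRel S u v := by
  induction h with
  | refl w => exact .refl w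
  | symm _ ih => exact .symm ih
  | trans _ _ ih1 ih2 => exact .trans ih1 ih2
  | append _ _ ih1 ih2 => exact .append ih1 ih2
  | cancel u0 ts _ _ _ hts _ _ =>
    refine .append (.refl u0) ?_
    clear * - hts
    induction ts with
    | nil => exact .refl _
    | cons t ts ih =>
      have h1 : CS.DyckRel S t.2.1 [] := (hts t List.mem_cons_self).1
      have h2 : CS.DyckRel S ([Sum.inl t.1] ++ t.2.1 ++ [Sum.inr t.1]) [] :=
        .trans (.append (.append (.refl [Sum.inl t.1]) h1) (.refl [Sum.inr t.1]))
          (.cancel t.1)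
      have h3 : CS.DyckRel S ([Sum.inl t.1] ++ t.2.1 ++ [Sum.inr t.1] ++ t.2.2) t.2.2 :=
        .append h2 (.refl t.2.2)
      have h4 := ih (fun x hx => hts x (List.mem_cons_of_mem _ hx))
      exact .append h3 h4

/-- For every partition `𝔓` of `Σ`, every member of the
congruence multiple Dyck language is a Dyck word: `mD_c(Σ,𝔓) ⊆ D(Σ)`. -/
theorem CS.mDyck_subset_Dyck (S : Type) (Pa : Set (Set S))
    (hPa : Setoid.IsPartition Pa) :
    CS.MDyckLang S Pa ⊆ CS.DyckLang S := by
  intro w hw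
  exact CS.MDyckRel.toDyck hw
end
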